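/- Let G be a finite connected simple graph. If G has two vertex-disjoint odd cycles, then deg(P_G) ≥ 3. -/

import Mathlib

open MvPolynomial Pointwise

/-- `ρ({i,j}) = e_i + e_j` : the 0/1 (incidence) vector of an edge. -/
noncomputable def rho {N : ℕ} (e : Sym2 (Fin N)) : Fin N → ℝ :=
  fun v => if v ∈ e then 1 else 0

/-- The edge polytope of a graph on `Fin N`. -/
noncomputable def edgePolytope {N : ℕ} (G : SimpleGraph (Fin N)) : Set (Fin N → ℝ) :=
  convexHull ℝ (rho '' G.edgeSet)

/-- Number of lattice points of the `t`-th dilation (`= 1` for `t = 0`). -/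
noncomputable def ehr {N : ℕ} (P : Set (Fin N → ℝ)) (t : ℕ) : ℕ :=
  if t = 0 then 1 else Nat.card {x : Fin N → ℤ // (fun i => (x i : ℝ)) ∈ (t : ℝ) • P}

/-- The dimension of a polytope: the rank of the direction of its affine span. -/
noncomputable def polyDim {N : ℕ} (P : Set (Fin N → ℝ)) : ℕ :=
  Module.finrank ℝ (affineSpan ℝ P).direction

/-- The `i`-th coefficient of `(1-λ)^{d+1} (1 + Σ_{t≥1} |tP ∩ Z^N| λ^t)`. -/
noncomputable def deltaCoeff {N : ℕ} (P : Set (Fin N → ℝ)) (i : ℕ) : ℤ :=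
  ∑ j ∈ Finset.range (i + 1),
    (-1 : ℤ) ^ j * (Nat.choose (polyDim P + 1) j : ℤ) * (ehr P (i - j) : ℤ)

/-- The degree of the δ-polynomial of `P`. -/
noncomputable def polyDeg {N : ℕ} (P : Set (Fin N → ℝ)) : ℕ :=
  sSup {i : ℕ | deltaCoeff P i ≠ 0}

/-- The monomial `t_i t_j s` attached to an edge `{i,j}`; `s` is the variable `none`. -/
noncomputable def edgeMonom (K : Type*) [Field K] {V : Type*} (e : Sym2 V) :
    MvPolynomial (Option V) K :=
  Sym2.lift ⟨fun i j => X (some i) * X (some j) * X none, fun i j => by ring⟩ e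

/-- The edge ring `K[G]`, the subalgebra generated by the monomials `t^{ρ(e)} s`. -/
noncomputable def edgeRing (K : Type*) [Field K] {V : Type*} (G : SimpleGraph V) :
    Subalgebra K (MvPolynomial (Option V) K) :=
  Algebra.adjoin K (edgeMonom K '' G.edgeSet)

/-- The toric ideal `I_G`: kernel of `x_e ↦ t^{ρ(e)} s`. -/
noncomputable def toricIdeal (K : Type*) [Field K] {V : Type*} (G : SimpleGraph V) :
    Ideal (MvPolynomial G.edgeSet K) :=
  RingHom.ker (MvPolynomial.aeval (fun e : G.edgeSet => edgeMonom K (e : Sym2 V)) :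
    MvPolynomial G.edgeSet K →ₐ[K] MvPolynomial (Option V) K)

/-- `S/I` has a `q`-linear (minimal graded free) resolution: there is a graded free
resolution of `S/I` in which the free module at homological step `i ≥ 1` is generated
in the single degree `q + i - 1`; equivalently all Betti numbers `β_{i,j}` with
`j ≠ q + i - 1` vanish. -/
def HasLinearResolution {σ K : Type*} [Field K] (q : ℕ)
    (I : Ideal (MvPolynomial σ K)) : Prop :=
  ∃ (b : ℕ → ℕ)
    (φ₀ : (Fin (b 0) →₀ MvPolynomial σ K) →ₗ[MvPolynomial σ K] MvPolynomial σ K)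
    (φ : ∀ i : ℕ,
      (Fin (b (i + 1)) →₀ MvPolynomial σ K) →ₗ[MvPolynomial σ K]
        (Fin (b i) →₀ MvPolynomial σ K)),
    LinearMap.range φ₀ = I ∧
    LinearMap.ker φ₀ = LinearMap.range (φ 0) ∧
    (∀ i, LinearMap.ker (φ i) = LinearMap.range (φ (i + 1))) ∧
    (∀ j, (φ₀ (Finsupp.single j 1)).IsHomogeneous q) ∧
    (∀ i j k, ((φ i (Finsupp.single j 1)) k).IsHomogeneous 1)

/-!
Fix a generic height function on the generators of the cone over a lattice polytope and push the
cone generically from the inside: the cells of the resulting regular triangulation become half-open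
simplicial cones that partition the cone. Each of them is a disjoint union of translates of its
half-open fundamental box by lattice vectors, so the `i`-th coefficient of the `δ`-polynomial is the
number of lattice points of height `i` in the boxes; in particular there is no cancellation.

Let `d` be the dimension of the cone and let `q` be a lattice point of height `m` in its interior.
Pushing `q` in the opposite direction places it in a half-open cell, and reflecting it there yields
a lattice point of height at least `d - m` in a box, whence `d ≤ deg + m`.

The edges of two vertex-disjoint odd cycles of total length `2h` have linearly independent incidence
vectors, and half the sum of these vectors is integral. Extend them to a basis of edges of the cone:
this half sum plus the remaining basis vectors is an interior lattice point of height `d - h`, so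
`deg ≥ h ≥ 3`.
-/

section Bases

variable {ι K V : Type*} [Field K] [AddCommGroup V] [Module K V] {v : ι → V} {τ : Finset ι}

/-- The vectors `v i` with `i ∈ τ` form a basis of the span of the whole family `v`. -/
structure IsBasisOn (K : Type*) {ι V : Type*} [Field K] [AddCommGroup V] [Module K V]
    (v : ι → V) (τ : Finset ι) : Prop where
  linearIndepOn : LinearIndepOn K v τ
  span_range_le : Submodule.span K (Set.range v) ≤ Submodule.span K (v '' τ)

/-- The coordinates of a vector with respect to the independent family `v i`, `i ∈ τ`, extended by
zero outside `τ`. They are meaningful only on the span of that family; elsewhere an arbitrary linear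
extension is taken. -/
noncomputable def basisCoord (K : Type*) {ι V : Type*} [Field K] [AddCommGroup V] [Module K V]
    (v : ι → V) (τ : Finset ι) : V →ₗ[K] ι → K :=
  Function.ExtendByZero.linearMap K ((↑) : τ → ι) ∘ₗ
    (Fintype.linearCombination K fun i : τ => v i).leftInverse

theorem basisCoord_apply_of_notMem (x : V) {i : ι} (hi : i ∉ τ) : basisCoord K v τ x i = 0 := by
  simp [basisCoord, Function.extend_apply', hi]

theorem basisCoord_apply_self [DecidableEq ι] (h : LinearIndepOn K v τ) {i : ι} (hi : i ∈ τ) :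
    basisCoord K v τ (v i) = Pi.single i 1 := by
  have hinj : LinearMap.ker (Fintype.linearCombination K fun i : τ => v i) = ⊥ :=
    LinearMap.ker_eq_bot.2 (linearIndependent_iff_injective_fintypeLinearCombination.1 h)
  have hv : Fintype.linearCombination K (fun i : τ => v i) (Pi.single ⟨i, hi⟩ 1) = v i := by
    simp
  have hcoord : (Fintype.linearCombination K fun i : τ => v i).leftInverse (v i) =
      Pi.single ⟨i, hi⟩ 1 := by
    rw [← hv, LinearMap.leftInverse_apply_of_inj hinj]
  ext j
  by_cases hj : j ∈ τ
  · rw [basisCoord, LinearMap.comp_apply, hcoord]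
    simpa [Pi.single_apply] using
      Subtype.val_injective.extend_apply (Pi.single (⟨i, hi⟩ : τ) (1 : K)) 0 ⟨j, hj⟩
  · rw [basisCoord_apply_of_notMem _ hj, Pi.single_eq_of_ne (ne_of_mem_of_not_mem hi hj).symm]

theorem basisCoord_sum_smul_apply (h : LinearIndepOn K v τ) (a : ι → K) {i : ι} (hi : i ∈ τ) :
    basisCoord K v τ (∑ j ∈ τ, a j • v j) i = a i := by
  classical
  have hterm : ∀ j ∈ τ, basisCoord K v τ (a j • v j) i = if j = i then a i else 0 := by
    intro j hj
    rcases eq_or_ne j i with rfl | hji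
    · simp [basisCoord_apply_self h hj]
    · simp [basisCoord_apply_self h hj, hji]
  rw [map_sum, Finset.sum_apply, Finset.sum_congr rfl hterm, Finset.sum_ite_eq', if_pos hi]

theorem exists_isBasisOn_superset [Finite ι] (h : LinearIndepOn K v τ) :
    ∃ σ, τ ⊆ σ ∧ IsBasisOn K v σ := by
  obtain ⟨b, -, hτb, hspan, hb⟩ := exists_linearIndepOn_extension h (Set.subset_univ _)
  lift b to Finset ι using b.toFinite
  exact ⟨b, Finset.coe_subset.1 hτb, hb, Submodule.span_le.2 (by simpa using hspan)⟩

theorem IsBasisOn.card_eq_finrank (h : IsBasisOn K v τ) :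
    τ.card = Module.finrank K (Submodule.span K (Set.range v)) := by
  have hspan : Submodule.span K (Set.range v) = Submodule.span K (v '' τ) :=
    h.span_range_le.antisymm (Submodule.span_mono (Set.image_subset_range _ _))
  rw [hspan, Set.image_eq_range, finrank_span_eq_card h.linearIndepOn]
  simp

namespace IsBasisOn

theorem sum_basisCoord_smul (h : IsBasisOn K v τ) {x : V}
    (hx : x ∈ Submodule.span K (Set.range v)) : ∑ i ∈ τ, basisCoord K v τ x i • v i = x := by
  classical
  let f : V →ₗ[K] V := ∑ i ∈ τ, (LinearMap.proj i ∘ₗ basisCoord K v τ).smulRight (v i)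
  have hf : Set.EqOn f (LinearMap.id : V →ₗ[K] V) (v '' τ) := by
    rintro _ ⟨i, hi, rfl⟩
    rw [Finset.mem_coe] at hi
    simp [f, basisCoord_apply_self h.linearIndepOn hi, Pi.single_apply, hi]
  simpa [f] using LinearMap.eqOn_span hf (h.span_range_le hx)

theorem sum_basisCoord (h : IsBasisOn K v τ) {l : V →ₗ[K] K} (hl : ∀ i, l (v i) = 1) {x : V}
    (hx : x ∈ Submodule.span K (Set.range v)) : ∑ i ∈ τ, basisCoord K v τ x i = l x := by
  conv_rhs => rw [← h.sum_basisCoord_smul hx]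
  simp [hl]

end IsBasisOn

variable [Fintype ι]

theorem basisCoord_sum_smul (h : LinearIndepOn K v τ) {a : ι → K} (ha : ∀ i ∉ τ, a i = 0) :
    basisCoord K v τ (∑ i, a i • v i) = a := by
  ext i
  rw [← Finset.sum_subset τ.subset_univ fun j _ hj => by rw [ha j hj, zero_smul]]
  by_cases hi : i ∈ τ
  · exact basisCoord_sum_smul_apply h a hi
  · rw [basisCoord_apply_of_notMem _ hi, ha i hi]

theorem IsBasisOn.sum_univ_basisCoord_smul (h : IsBasisOn K v τ) {x : V}
    (hx : x ∈ Submodule.span K (Set.range v)) : ∑ i, basisCoord K v τ x i • v i = x := by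
  rw [← Finset.sum_subset τ.subset_univ fun i _ hi => by
    rw [basisCoord_apply_of_notMem x hi, zero_smul], h.sum_basisCoord_smul hx]

end Bases

section RegularCells

open Filter Topology

variable {ι V : Type*} [AddCommGroup V] [Module ℝ V] {v : ι → V} {τ τ' : Finset ι}
  {w : ι → ℝ} {l : V →ₗ[ℝ] ℝ} {x s : V}

theorem basisCoord_nonneg (hpos : ∀ i ∈ τ, 0 ≤ basisCoord ℝ v τ x i) (i : ι) :
    0 ≤ basisCoord ℝ v τ x i := by
  by_cases hi : i ∈ τ
  · exact hpos i hi
  · exact (basisCoord_apply_of_notMem x hi).ge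

theorem mem_hull_range_iff [Fintype ι] :
    x ∈ PointedCone.hull ℝ (Set.range v) ↔ ∃ a : ι → ℝ, (∀ i, 0 ≤ a i) ∧ ∑ i, a i • v i = x := by
  rw [PointedCone.hull, Submodule.mem_span_range_iff_exists_fun]
  constructor
  · rintro ⟨c, rfl⟩
    exact ⟨fun i => c i, fun i => (c i).2, rfl⟩
  · rintro ⟨a, ha, rfl⟩
    exact ⟨fun i => ⟨a i, ha i⟩, rfl⟩

theorem IsBasisOn.mem_hull (h : IsBasisOn ℝ v τ) (hx : x ∈ Submodule.span ℝ (Set.range v))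
    (hpos : ∀ i ∈ τ, 0 ≤ basisCoord ℝ v τ x i) : x ∈ PointedCone.hull ℝ (Set.range v) := by
  rw [← h.sum_basisCoord_smul hx]
  exact Submodule.sum_mem _ fun i hi =>
    PointedCone.smul_mem _ (hpos i hi) (PointedCone.subset_hull ⟨i, rfl⟩)

theorem exists_pos_smul_add_vanishing [Finite ι] {b c : ι → ℝ} (hb : ∀ i, 0 ≤ b i)
    (hcb : ∀ i, b i = 0 → c i = 0) (hneg : ∃ i, c i < 0) :
    ∃ t : ℝ, 0 < t ∧ (∀ i, 0 ≤ b i + t * c i) ∧ ∃ i, b i ≠ 0 ∧ b i + t * c i = 0 := by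
  obtain ⟨k, hk, hmin⟩ := Set.exists_min_image {i | c i < 0} (fun i => b i / -c i)
    (Set.toFinite _) hneg
  have hbk : b k ≠ 0 := fun h => hk.ne (hcb k h)
  have hck : 0 < -c k := neg_pos.2 hk
  have ht : 0 < b k / -c k := div_pos ((hb k).lt_of_ne' hbk) hck
  refine ⟨b k / -c k, ht, fun i => ?_, k, hbk, ?_⟩
  · by_cases hi : c i < 0
    · have := hmin i hi
      rw [le_div_iff₀ (neg_pos.2 hi)] at this
      linarith
    · exact add_nonneg (hb i) (mul_nonneg ht.le (not_lt.1 hi))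
  · linarith [div_mul_cancel₀ (b k) hck.ne']

theorem eventually_add_mul_nonneg [Finite ι] {b c : ι → ℝ} (hb : ∀ i, 0 ≤ b i)
    (hc : ∀ i, b i = 0 → 0 ≤ c i) : ∀ᶠ t in 𝓝[>] (0 : ℝ), ∀ i, 0 ≤ b i + t * c i := by
  rw [eventually_all]
  intro i
  rcases (hb i).eq_or_lt' with hi | hi
  · filter_upwards [self_mem_nhdsWithin] with t ht
    exact add_nonneg (hb i) (mul_nonneg (Set.mem_Ioi.1 ht).le (hc i hi))
  · have hlim : Tendsto (fun t : ℝ => b i + t * c i) (𝓝 0) (𝓝 (b i)) :=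
      Continuous.tendsto' (by fun_prop) _ _ (by simp)
    exact ((hlim.eventually (lt_mem_nhds hi)).filter_mono nhdsWithin_le_nhds).mono fun _ h => h.le

theorem IsBasisOn.eventually_add_smul_mem_hull [Finite ι] (h : IsBasisOn ℝ v τ)
    (hx : x ∈ Submodule.span ℝ (Set.range v)) (hpos : ∀ i ∈ τ, 0 < basisCoord ℝ v τ x i)
    (hs : s ∈ Submodule.span ℝ (Set.range v)) :
    ∀ᶠ ε in 𝓝[>] (0 : ℝ), x + ε • s ∈ PointedCone.hull ℝ (Set.range v) := by
  have hcoord := eventually_add_mul_nonneg (c := basisCoord ℝ v τ s)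
    (basisCoord_nonneg fun i hi => (hpos i hi).le) fun i hi =>
      (basisCoord_apply_of_notMem s fun hiτ => (hpos i hiτ).ne' hi).ge
  filter_upwards [hcoord] with ε hε
  exact h.mem_hull (add_mem hx (Submodule.smul_mem _ _ hs)) fun i _ => by simpa using hε i

/-- A vector lying on no facet hyperplane of a simplicial cone spanned by a basis among `v`. -/
def IsGenericVector (v : ι → V) (s : V) : Prop :=
  ∀ σ, IsBasisOn ℝ v σ → ∀ i ∈ σ, basisCoord ℝ v σ s i ≠ 0

theorem IsGenericVector.neg (h : IsGenericVector v s) : IsGenericVector v (-s) :=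
  fun σ hσ i hi => by simpa using h σ hσ i hi

variable [Fintype ι]

theorem exists_dependence_dotProduct_nonpos {A : Set ι} (h : ¬LinearIndepOn ℝ v A) (w : ι → ℝ) :
    ∃ c : ι → ℝ, c ≠ 0 ∧ (∀ i ∉ A, c i = 0) ∧ ∑ i, c i • v i = 0 ∧ c ⬝ᵥ w ≤ 0 := by
  rw [linearIndepOn_iff] at h
  push Not at h
  obtain ⟨c, hcA, hcv, hc⟩ := h
  have hcA : ∀ i ∉ A, c i = 0 := (Finsupp.mem_supported' ℝ c).1 hcA
  rw [Finsupp.linearCombination_apply, c.sum_fintype _ fun i => zero_smul ℝ (v i)] at hcv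
  rcases le_total (c ⬝ᵥ w) 0 with hw | hw
  · exact ⟨c, by simpa using hc, hcA, hcv, hw⟩
  · exact ⟨-c, by simpa using hc, fun i hi => by simp [hcA i hi], by simpa using hcv,
      by simpa using hw⟩

theorem exists_neg_of_sum_smul_eq_zero (hl : ∀ i, 0 < l (v i)) {c : ι → ℝ} (hc : c ≠ 0)
    (hcv : ∑ i, c i • v i = 0) : ∃ i, c i < 0 := by
  by_contra! hnonneg
  have hsum : ∑ i, c i * l (v i) = 0 := by simpa using congrArg l hcv
  rw [Finset.sum_eq_zero_iff_of_nonneg fun i _ => mul_nonneg (hnonneg i) (hl i).le] at hsum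
  exact hc (funext fun i =>
    (mul_eq_zero.1 (hsum i (Finset.mem_univ i))).resolve_right (hl i).ne')

-- Carathéodory's theorem for cones, carried out without increasing a prescribed cost.
theorem exists_linearIndepOn_support_dotProduct_le (hl : ∀ i, 0 < l (v i)) (w : ι → ℝ)
    {a : ι → ℝ} (ha : ∀ i, 0 ≤ a i) :
    ∃ b : ι → ℝ, (∀ i, 0 ≤ b i) ∧ ∑ i, b i • v i = ∑ i, a i • v i ∧ b ⬝ᵥ w ≤ a ⬝ᵥ w ∧
      LinearIndepOn ℝ v (Function.support b) := by
  induction hn : (Function.support a).ncard using Nat.strong_induction_on generalizing a with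
  | _ n ih =>
    subst hn
    by_cases hind : LinearIndepOn ℝ v (Function.support a)
    · exact ⟨a, ha, rfl, le_rfl, hind⟩
    obtain ⟨c, hc, hca, hcv, hcw⟩ := exists_dependence_dotProduct_nonpos hind w
    have hca : ∀ i, a i = 0 → c i = 0 := fun i hi => hca i (by simpa using hi)
    obtain ⟨t, ht, hnonneg, k, hk, hvanish⟩ :=
      exists_pos_smul_add_vanishing ha hca (exists_neg_of_sum_smul_eq_zero hl hc hcv)
    have hsupp : Function.support (a + t • c) ⊂ Function.support a := by
      refine (Set.ssubset_iff_of_subset fun i hi => ?_).2 ⟨k, hk, by simpa using hvanish⟩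
      contrapose! hi
      simp_all
    obtain ⟨b, hb, hbv, hbw, hbi⟩ :=
      ih _ (Set.ncard_lt_ncard hsupp) (a := a + t • c) hnonneg rfl
    refine ⟨b, hb, ?_, hbw.trans ?_, hbi⟩
    · simpa [add_smul, Finset.sum_add_distrib, mul_smul, ← Finset.smul_sum, hcv] using hbv
    · simpa [add_dotProduct] using mul_nonpos_of_nonneg_of_nonpos ht.le hcw

/-- The linear functional on the span of `v` taking the value `w i` at `v i` for all `i` in the
basis `τ`. -/
noncomputable def interpolant (v : ι → V) (τ : Finset ι) (w : ι → ℝ) : V →ₗ[ℝ] ℝ :=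
  Fintype.linearCombination ℝ w ∘ₗ basisCoord ℝ v τ

theorem interpolant_apply (v : ι → V) (τ : Finset ι) (w : ι → ℝ) (x : V) :
    interpolant v τ w x = basisCoord ℝ v τ x ⬝ᵥ w := rfl

theorem interpolant_apply_self (h : LinearIndepOn ℝ v τ) (w : ι → ℝ) {i : ι} (hi : i ∈ τ) :
    interpolant v τ w (v i) = w i := by
  classical
  rw [interpolant_apply, basisCoord_apply_self h hi, single_dotProduct, one_mul]

/-- The vectors `v i`, `i ∈ τ`, span a maximal cell of the regular subdivision of the cone over `v`
induced by the heights `w`: the lifted vectors `(v i, w i)` with `i ∉ τ` lie strictly above the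
hyperplane through those with `i ∈ τ`. -/
structure IsRegularCell (v : ι → V) (w : ι → ℝ) (τ : Finset ι) : Prop extends
    IsBasisOn ℝ v τ where
  interpolant_lt : ∀ i ∉ τ, interpolant v τ w (v i) < w i

/-- Heights for which no lifted vector lies on the hyperplane through a lifted basis, so that all
maximal cells of the induced subdivision are simplicial. -/
def IsGenericLift (v : ι → V) (w : ι → ℝ) : Prop :=
  ∀ σ, IsBasisOn ℝ v σ → ∀ i ∉ σ, interpolant v σ w (v i) ≠ w i

namespace IsRegularCell

theorem interpolant_le (h : IsRegularCell v w τ) (i : ι) : interpolant v τ w (v i) ≤ w i := by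
  by_cases hi : i ∈ τ
  · exact (interpolant_apply_self h.linearIndepOn w hi).le
  · exact (h.interpolant_lt i hi).le

theorem interpolant_sum_smul_le (h : IsRegularCell v w τ) {a : ι → ℝ} (ha : ∀ i, 0 ≤ a i) :
    interpolant v τ w (∑ i, a i • v i) ≤ a ⬝ᵥ w := by
  simp only [map_sum, map_smul, smul_eq_mul]
  exact Finset.sum_le_sum fun i _ => mul_le_mul_of_nonneg_left (h.interpolant_le i) (ha i)

theorem eq_zero_of_dotProduct_le (h : IsRegularCell v w τ) {a : ι → ℝ} (ha : ∀ i, 0 ≤ a i)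
    (hle : a ⬝ᵥ w ≤ interpolant v τ w (∑ i, a i • v i)) {i : ι} (hi : i ∉ τ) : a i = 0 := by
  have heq := (h.interpolant_sum_smul_le ha).antisymm hle
  simp only [map_sum, map_smul, smul_eq_mul] at heq
  have hterm := (Finset.sum_eq_sum_iff_of_le fun i _ =>
    mul_le_mul_of_nonneg_left (h.interpolant_le i) (ha i)).1 heq i (Finset.mem_univ i)
  by_contra hai
  exact (h.interpolant_lt i hi).ne (mul_left_cancel₀ hai hterm)

theorem subset_of_pos (h : IsRegularCell v w τ) (h' : IsRegularCell v w τ')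
    (hx : x ∈ Submodule.span ℝ (Set.range v)) (hpos : ∀ i ∈ τ, 0 < basisCoord ℝ v τ x i)
    (hpos' : ∀ i ∈ τ', 0 < basisCoord ℝ v τ' x i) : τ' ⊆ τ := by
  have hnonneg := basisCoord_nonneg fun i hi => (hpos i hi).le
  have hnonneg' := basisCoord_nonneg fun i hi => (hpos' i hi).le
  have hle : basisCoord ℝ v τ' x ⬝ᵥ w ≤ interpolant v τ w x := by
    simpa only [h.sum_univ_basisCoord_smul hx, interpolant_apply] using
      h'.interpolant_sum_smul_le hnonneg
  intro i hi
  by_contra hiτ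
  refine (hpos' i hi).ne' (h.eq_zero_of_dotProduct_le hnonneg' ?_ hiτ)
  rwa [h'.sum_univ_basisCoord_smul hx]

theorem eq_of_pos (h : IsRegularCell v w τ) (h' : IsRegularCell v w τ')
    (hx : x ∈ Submodule.span ℝ (Set.range v)) (hpos : ∀ i ∈ τ, 0 < basisCoord ℝ v τ x i)
    (hpos' : ∀ i ∈ τ', 0 < basisCoord ℝ v τ' x i) : τ = τ' :=
  (h'.subset_of_pos h hx hpos' hpos).antisymm (h.subset_of_pos h' hx hpos hpos')

end IsRegularCell

theorem exists_isBasisOn_interpolant_le (hl : ∀ i, 0 < l (v i)) (w : ι → ℝ) {a : ι → ℝ}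
    (ha : ∀ i, 0 ≤ a i) :
    ∃ τ, IsBasisOn ℝ v τ ∧ (∀ i, 0 ≤ basisCoord ℝ v τ (∑ i, a i • v i) i) ∧
      interpolant v τ w (∑ i, a i • v i) ≤ a ⬝ᵥ w := by
  obtain ⟨b, hb, hba, hbw, hind⟩ := exists_linearIndepOn_support_dotProduct_le hl w ha
  obtain ⟨τ, hbτ, hτ⟩ := exists_isBasisOn_superset (K := ℝ) (v := v)
    (τ := (Function.support b).toFinite.toFinset) (by simpa using hind)
  have hcoord : basisCoord ℝ v τ (∑ i, a i • v i) = b := by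
    rw [← hba]
    refine basisCoord_sum_smul hτ.linearIndepOn fun i hi => ?_
    by_contra hbi
    exact hi (hbτ (by simpa using hbi))
  exact ⟨τ, hτ, hcoord ▸ hb, by rwa [interpolant_apply, hcoord]⟩

theorem exists_isBasisOn_interpolant_minimal (hl : ∀ i, 0 < l (v i)) (w : ι → ℝ)
    (hx : x ∈ PointedCone.hull ℝ (Set.range v)) :
    ∃ τ, IsBasisOn ℝ v τ ∧ (∀ i, 0 ≤ basisCoord ℝ v τ x i) ∧
      ∀ a : ι → ℝ, (∀ i, 0 ≤ a i) → ∑ i, a i • v i = x → interpolant v τ w x ≤ a ⬝ᵥ w := by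
  obtain ⟨a, ha, rfl⟩ := mem_hull_range_iff.1 hx
  obtain ⟨τ₀, hτ₀, hτ₀a, -⟩ := exists_isBasisOn_interpolant_le hl w ha
  obtain ⟨τ, ⟨hτ, hτa⟩, hmin⟩ := Set.exists_min_image
    {τ | IsBasisOn ℝ v τ ∧ ∀ i, 0 ≤ basisCoord ℝ v τ (∑ i, a i • v i) i}
    (fun τ => interpolant v τ w (∑ i, a i • v i)) (Set.toFinite _) ⟨τ₀, hτ₀, hτ₀a⟩
  refine ⟨τ, hτ, hτa, fun b hb hba => ?_⟩
  obtain ⟨σ, hσ, hσb, hle⟩ := exists_isBasisOn_interpolant_le hl w hb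
  rw [hba] at hσb hle
  exact (hmin σ ⟨hσ, hσb⟩).trans hle

theorem exists_isRegularCell_pos (hl : ∀ i, 0 < l (v i)) (hw : IsGenericLift v w)
    (hx : x ∈ PointedCone.hull ℝ (Set.range v)) (hgen : IsGenericVector v x) :
    ∃ τ, IsRegularCell v w τ ∧ ∀ i ∈ τ, 0 < basisCoord ℝ v τ x i := by
  classical
  obtain ⟨τ, hτ, hnonneg, hmin⟩ := exists_isBasisOn_interpolant_minimal hl w hx
  refine ⟨τ, ⟨hτ, fun f hf => (hw τ hτ f hf).lt_of_le ?_⟩,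
    fun i hi => (hnonneg i).lt_of_ne' (hgen τ hτ i hi)⟩
  let c : ι → ℝ := Pi.single f 1 - basisCoord ℝ v τ (v f)
  have hcv : ∑ i, c i • v i = 0 := by
    simp [c, sub_smul, hτ.sum_univ_basisCoord_smul (Submodule.subset_span (Set.mem_range_self f)),
      Pi.single_apply]
  have hc (i : ι) (hi : basisCoord ℝ v τ x i = 0) : 0 ≤ c i := by
    have hiτ : i ∉ τ := fun h => hgen τ hτ i h hi
    simp only [c, Pi.sub_apply, basisCoord_apply_of_notMem _ hiτ, sub_zero]
    exact (Pi.single_nonneg.2 zero_le_one : (0 : ι → ℝ) ≤ Pi.single f 1) i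
  obtain ⟨t, hnonneg', ht⟩ :=
    ((eventually_add_mul_nonneg hnonneg hc).and self_mem_nhdsWithin).exists
  have hcost := hmin (basisCoord ℝ v τ x + t • c) hnonneg' (by
    simp [add_smul, Finset.sum_add_distrib, mul_smul, ← Finset.smul_sum, hcv,
      hτ.sum_univ_basisCoord_smul (PointedCone.hull_le_span _ _ hx)])
  rw [add_dotProduct, smul_dotProduct, smul_eq_mul, interpolant_apply,
    le_add_iff_nonneg_right] at hcost
  have hcw : 0 ≤ c ⬝ᵥ w := nonneg_of_mul_nonneg_right hcost ht
  simpa [c, sub_dotProduct, interpolant_apply] using hcw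

end RegularCells

section HalfOpenDecomposition

open Filter Topology

/-- The integer part of `x + ε * y` for all sufficiently small `ε > 0`, provided `y ≠ 0`. -/
noncomputable def perturbedFloor (x y : ℝ) : ℤ := if 0 < y then ⌊x⌋ else ⌈x⌉ - 1

theorem perturbedFloor_add_one (x y : ℝ) : perturbedFloor (x + 1) y = perturbedFloor x y + 1 := by
  unfold perturbedFloor
  split_ifs
  · exact Int.floor_add_one x
  · rw [Int.ceil_add_one]
    ring

theorem perturbedFloor_intCast_sub (n : ℤ) (x : ℝ) {y : ℝ} (hy : y ≠ 0) :
    perturbedFloor (n - x) y = n - 1 - perturbedFloor x (-y) := by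
  rcases hy.lt_or_gt with h | h
  · have hceil : ⌈n - x⌉ = n - ⌊x⌋ := by
      rw [sub_eq_add_neg, Int.ceil_intCast_add, Int.ceil_neg, sub_eq_add_neg]
    simp only [perturbedFloor, h.not_gt, neg_pos.2 h, if_true, if_false, hceil]
    ring
  · have hfloor : ⌊n - x⌋ = n - ⌈x⌉ := by
      rw [sub_eq_add_neg, Int.floor_intCast_add, Int.floor_neg, sub_eq_add_neg]
    simp only [perturbedFloor, h, (neg_lt_zero.2 h).not_gt, if_true, if_false, hfloor]
    ring

theorem nonneg_of_perturbedFloor_nonneg {x y : ℝ} (h : 0 ≤ perturbedFloor x y) : 0 ≤ x := by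
  unfold perturbedFloor at h
  split_ifs at h
  · exact Int.floor_nonneg.1 h
  · exact (Int.ceil_pos.1 (by omega)).le

theorem le_one_of_perturbedFloor_eq_zero {x y : ℝ} (h : perturbedFloor x y = 0) : x ≤ 1 := by
  unfold perturbedFloor at h
  split_ifs at h
  · simpa [h] using (Int.lt_floor_add_one x).le
  · simpa [sub_eq_zero.1 h] using Int.le_ceil x

theorem perturbedFloor_nonneg_iff {x y : ℝ} :
    0 ≤ perturbedFloor x y ↔ 0 < x ∨ x = 0 ∧ 0 < y := by
  unfold perturbedFloor
  split_ifs with h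
  · rw [Int.floor_nonneg, le_iff_lt_or_eq]
    simp [h, eq_comm]
  · rw [sub_nonneg, ← Int.zero_add 1, Int.add_one_le_iff, Int.ceil_pos]
    simp [h]

theorem eventually_pos_iff_perturbedFloor_nonneg (x : ℝ) {y : ℝ} (hy : y ≠ 0) :
    ∀ᶠ ε in 𝓝[>] (0 : ℝ),
      x + ε * y ≠ 0 ∧ (0 < x + ε * y ↔ 0 ≤ perturbedFloor x y) := by
  have hlim : Tendsto (fun ε : ℝ => x + ε * y) (𝓝[>] 0) (𝓝 x) :=
    (Continuous.tendsto' (by fun_prop) _ _ (by simp)).mono_left nhdsWithin_le_nhds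
  rw [perturbedFloor_nonneg_iff]
  rcases lt_trichotomy x 0 with hx | rfl | hx
  · filter_upwards [hlim.eventually (gt_mem_nhds hx)] with ε hε
    exact ⟨hε.ne, by simp [hε.not_gt, hx.not_gt, hx.ne]⟩
  · filter_upwards [self_mem_nhdsWithin] with ε hε
    have hε : (0 : ℝ) < ε := hε
    exact ⟨by simp [hε.ne', hy], by simp [hε]⟩
  · filter_upwards [hlim.eventually (lt_mem_nhds hx)] with ε hε
    exact ⟨hε.ne', by simp [hε, hx]⟩

variable {ι V : Type*} [AddCommGroup V] [Module ℝ V] {v : ι → V} {τ : Finset ι} {w : ι → ℝ}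
  {l : V →ₗ[ℝ] ℝ} {x s : V}

/-- The integer parts of the coordinates of `x` in the basis `τ`, after a small displacement of
`x` in the direction `s`. -/
noncomputable def coordFloor (v : ι → V) (s : V) (τ : Finset ι) (x : V) (i : ι) : ℤ :=
  perturbedFloor (basisCoord ℝ v τ x i) (basisCoord ℝ v τ s i)

theorem coordFloor_add_self [DecidableEq ι] (h : LinearIndepOn ℝ v τ) {i : ι} (hi : i ∈ τ) :
    coordFloor v s τ (x + v i) = coordFloor v s τ x + Pi.single i 1 := by
  ext j
  rw [coordFloor, map_add, basisCoord_apply_self h hi]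
  rcases eq_or_ne j i with rfl | hj
  · simp [coordFloor, perturbedFloor_add_one]
  · simp [coordFloor, hj]

variable [Fintype ι]

-- A small displacement in the direction `s` moves `x` into the interior of exactly one cell.
theorem existsUnique_isRegularCell_coordFloor_nonneg (hl : ∀ i, 0 < l (v i))
    (hw : IsGenericLift v w) (hs : IsGenericVector v s)
    (hx : ∀ᶠ ε in 𝓝[>] (0 : ℝ), x + ε • s ∈ PointedCone.hull ℝ (Set.range v)) :
    ∃! τ, IsRegularCell v w τ ∧ ∀ i ∈ τ, 0 ≤ coordFloor v s τ x i := by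
  have hev : ∀ᶠ ε in 𝓝[>] (0 : ℝ), ∀ σ : Finset ι, ∀ i, IsBasisOn ℝ v σ → i ∈ σ →
      basisCoord ℝ v σ (x + ε • s) i ≠ 0 ∧ (0 < basisCoord ℝ v σ (x + ε • s) i ↔
        0 ≤ coordFloor v s σ x i) := by
    simp only [eventually_all]
    intro σ i hσ hi
    simpa [coordFloor] using
      eventually_pos_iff_perturbedFloor_nonneg (basisCoord ℝ v σ x i) (hs σ hσ i hi)
  obtain ⟨ε, hε, hxε⟩ := (hev.and hx).exists
  obtain ⟨τ, hτ, hpos⟩ := exists_isRegularCell_pos hl hw hxε fun σ hσ i hi => (hε σ i hσ hi).1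
  refine ⟨τ, ⟨hτ, fun i hi => (hε τ i hτ.toIsBasisOn hi).2.1 (hpos i hi)⟩, ?_⟩
  rintro τ' ⟨hτ', hpos'⟩
  exact hτ'.eq_of_pos hτ (PointedCone.hull_le_span _ _ hxε)
    (fun i hi => (hε τ' i hτ'.toIsBasisOn hi).2.2 (hpos' i hi)) hpos

theorem existsUnique_isRegularCell_of_mem_hull (hl : ∀ i, 0 < l (v i)) (hw : IsGenericLift v w)
    (hs : IsGenericVector v s) (hs₀ : s ∈ PointedCone.hull ℝ (Set.range v))
    (hx : x ∈ PointedCone.hull ℝ (Set.range v)) :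
    ∃! τ, IsRegularCell v w τ ∧ ∀ i ∈ τ, 0 ≤ coordFloor v s τ x i := by
  refine existsUnique_isRegularCell_coordFloor_nonneg hl hw hs ?_
  filter_upwards [self_mem_nhdsWithin] with ε hε
  exact add_mem hx (PointedCone.smul_mem _ (Set.mem_Ioi.1 hε).le hs₀)

end HalfOpenDecomposition

section GenericPosition

theorem dense_setOf_forall_apply_ne_zero {E κ : Type*} [NormedAddCommGroup E] [NormedSpace ℝ E]
    [FiniteDimensional ℝ E] [Finite κ] {L : κ → E →ₗ[ℝ] ℝ} (hL : ∀ k, L k ≠ 0) :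
    Dense {x | ∀ k, L k x ≠ 0} := by
  rw [Set.ofPred_forall]
  refine dense_iInter_of_isOpen (fun k => ?_) fun k => ?_
  · exact isOpen_ne_fun (L k).continuous_of_finiteDimensional continuous_const
  · refine (interior_eq_empty_iff_dense_compl (s := (LinearMap.ker (L k) : Set E))).1 ?_
    refine Set.not_nonempty_iff_eq_empty.1 fun h => hL k (LinearMap.ker_eq_top.1 ?_)
    exact (LinearMap.ker (L k)).eq_top_of_nonempty_interior' h

variable {ι V : Type*} [AddCommGroup V] [Module ℝ V] (v : ι → V)

theorem exists_isGenericLift [Fintype ι] : ∃ w, IsGenericLift v w := by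
  classical
  let L : {p : Finset ι × ι // IsBasisOn ℝ v p.1 ∧ p.2 ∉ p.1} → (ι → ℝ) →ₗ[ℝ] ℝ := fun p =>
    Fintype.linearCombination ℝ (basisCoord ℝ v p.1.1 (v p.1.2)) - LinearMap.proj p.1.2
  have hL (p) : L p ≠ 0 := by
    obtain ⟨⟨σ, i⟩, -, hi⟩ := p
    intro h
    simpa [L, basisCoord_apply_of_notMem (K := ℝ) (v := v) (v i) hi] using
      LinearMap.congr_fun h (Pi.single i 1)
  obtain ⟨w, hw⟩ := (dense_setOf_forall_apply_ne_zero hL).nonempty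
  refine ⟨w, fun σ hσ i hi => ?_⟩
  have := hw ⟨(σ, i), hσ, hi⟩
  simpa [L, Fintype.linearCombination_apply, interpolant_apply, dotProduct, mul_comm, sub_eq_zero]
    using this

theorem exists_isGenericVector_mem_hull [Finite ι] :
    ∃ s ∈ PointedCone.hull ℝ (Set.range v), IsGenericVector v s := by
  classical
  cases nonempty_fintype ι
  let L : {p : Finset ι × ι // IsBasisOn ℝ v p.1 ∧ p.2 ∈ p.1} → (ι → ℝ) →ₗ[ℝ] ℝ := fun p =>
    LinearMap.proj p.1.2 ∘ₗ basisCoord ℝ v p.1.1 ∘ₗ Fintype.linearCombination ℝ v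
  have hL (p) : L p ≠ 0 := by
    obtain ⟨⟨σ, i⟩, hσ, hi⟩ := p
    intro h
    simpa [L, basisCoord_apply_self hσ.linearIndepOn hi] using
      LinearMap.congr_fun h (Pi.single i 1)
  have hopen : IsOpen (Set.univ.pi fun _ : ι => Set.Ioi (0 : ℝ)) :=
    isOpen_set_pi Set.finite_univ fun _ _ => isOpen_Ioi
  obtain ⟨a, ha, hpos⟩ :=
    (dense_setOf_forall_apply_ne_zero hL).exists_mem_open hopen ⟨1, by simp⟩
  exact ⟨∑ i, a i • v i, mem_hull_range_iff.2 ⟨a, fun i => (hpos i trivial).le, rfl⟩,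
    fun σ hσ i hi => ha ⟨(σ, i), hσ, hi⟩⟩

end GenericPosition

section EhrhartNumerator

open scoped PowerSeries

variable {ι V : Type*} [AddCommGroup V] [Module ℝ V]

/-- The points of the lattice `Λ` of height `l x = t` in the cone over `v`. If `l (v i) = 1` for all
`i`, these are the lattice points of the `t`-th dilate of the convex hull of the `v i`. -/
def latticeDilate (Λ : AddSubgroup V) (v : ι → V) (l : V →ₗ[ℝ] ℝ) (t : ℝ) : Set V :=
  {x | x ∈ Λ ∧ x ∈ PointedCone.hull ℝ (Set.range v) ∧ l x = t}

/-- The points of `Λ` of height `t` in the half-open cone over the basis `τ` determined by `s`, with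
the coordinates in `τ \ σ` confined to a half-open unit interval. The half-open cone is `σ = τ`, the
half-open fundamental box is `σ = ∅`. -/
def halfOpenPrism (Λ : AddSubgroup V) (v : ι → V) (l : V →ₗ[ℝ] ℝ) (s : V) (τ σ : Finset ι)
    (t : ℝ) : Set V :=
  {x | x ∈ Λ ∧ x ∈ Submodule.span ℝ (Set.range v) ∧ l x = t ∧
    ∀ i ∈ τ, 0 ≤ coordFloor v s τ x i ∧ (i ∉ σ → coordFloor v s τ x i = 0)}

/-- The generating function of the numbers of points of a half-open prism. -/
noncomputable def prismSeries (Λ : AddSubgroup V) (v : ι → V) (l : V →ₗ[ℝ] ℝ) (s : V)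
    (τ σ : Finset ι) : ℤ⟦X⟧ :=
  PowerSeries.mk fun t => ((halfOpenPrism Λ v l s τ σ t).ncard : ℤ)

/-- The numerator of the Ehrhart series `∑ t, #(latticeDilate Λ v l t) * X ^ t`, that is the
`δ`-polynomial when the cone over `v` has height-one section a lattice polytope. -/
noncomputable def ehrhartNumerator (Λ : AddSubgroup V) (v : ι → V) (l : V →ₗ[ℝ] ℝ) : ℤ⟦X⟧ :=
  (1 - PowerSeries.X) ^ Module.finrank ℝ (Submodule.span ℝ (Set.range v)) *
    PowerSeries.mk fun t => ((latticeDilate Λ v l t).ncard : ℤ)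

variable {Λ : AddSubgroup V} {v : ι → V} {l : V →ₗ[ℝ] ℝ} {s : V} {τ σ : Finset ι} {w : ι → ℝ}
  {t : ℝ} {e : ι}

theorem mem_halfOpenPrism_self_iff {x : V} : x ∈ halfOpenPrism Λ v l s τ τ t ↔
    x ∈ Λ ∧ x ∈ Submodule.span ℝ (Set.range v) ∧ l x = t ∧
      ∀ i ∈ τ, 0 ≤ coordFloor v s τ x i :=
  and_congr_right' <| and_congr_right' <| and_congr_right' <|
    forall₂_congr fun _ hi => and_iff_left fun h => absurd hi h

theorem halfOpenPrism_insert_inter [DecidableEq ι] (he : e ∈ τ) (heσ : e ∉ σ) :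
    halfOpenPrism Λ v l s τ (insert e σ) t ∩ {x | coordFloor v s τ x e = 0} =
      halfOpenPrism Λ v l s τ σ t := by
  ext x
  constructor
  · rintro ⟨⟨hΛ, hspan, ht, hx⟩, hxe⟩
    refine ⟨hΛ, hspan, ht, fun i hi => ⟨(hx i hi).1, fun hiσ => ?_⟩⟩
    rcases eq_or_ne i e with rfl | hie
    · exact hxe
    · exact (hx i hi).2 (by simp [hie, hiσ])
  · rintro ⟨hΛ, hspan, ht, hx⟩
    exact ⟨⟨hΛ, hspan, ht, fun i hi => ⟨(hx i hi).1, fun hiσ => (hx i hi).2 fun h =>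
      hiσ (Finset.mem_insert_of_mem h)⟩⟩, (hx e he).2 heσ⟩

theorem halfOpenPrism_subset_latticeDilate (hτ : IsBasisOn ℝ v τ) :
    halfOpenPrism Λ v l s τ σ t ⊆ latticeDilate Λ v l t := by
  rintro x ⟨hΛ, hspan, ht, hx⟩
  exact ⟨hΛ, hτ.mem_hull hspan fun i hi => nonneg_of_perturbedFloor_nonneg (hx i hi).1, ht⟩

theorem halfOpenPrism_eq_empty (hl : ∀ i, l (v i) = 1) (hτ : IsBasisOn ℝ v τ) (ht : t < 0) :
    halfOpenPrism Λ v l s τ σ t = ∅ := by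
  refine Set.eq_empty_of_forall_notMem ?_
  rintro x ⟨-, hspan, rfl, hx⟩
  rw [← hτ.sum_basisCoord hl hspan] at ht
  exact ht.not_ge (Finset.sum_nonneg fun i hi => nonneg_of_perturbedFloor_nonneg (hx i hi).1)

theorem halfOpenPrism_empty_eq_empty (hl : ∀ i, l (v i) = 1) (hτ : IsBasisOn ℝ v τ)
    (ht : τ.card < t) : halfOpenPrism Λ v l s τ ∅ t = ∅ := by
  refine Set.eq_empty_of_forall_notMem ?_
  rintro x ⟨-, hspan, rfl, hx⟩
  rw [← hτ.sum_basisCoord hl hspan] at ht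
  refine ht.not_ge ((Finset.sum_le_card_nsmul τ _ 1 fun i hi => ?_).trans_eq (by simp))
  exact le_one_of_perturbedFloor_eq_zero ((hx i hi).2 (Finset.notMem_empty i))

theorem halfOpenPrism_insert_sdiff [DecidableEq ι] (hv : ∀ i, v i ∈ Λ)
    (hl : ∀ i, l (v i) = 1) (hτ : LinearIndepOn ℝ v τ) (he : e ∈ τ) :
    halfOpenPrism Λ v l s τ (insert e σ) t \ {x | coordFloor v s τ x e = 0} =
      (· + v e) '' halfOpenPrism Λ v l s τ (insert e σ) (t - 1) := by
  have hspan : v e ∈ Submodule.span ℝ (Set.range v) := Submodule.subset_span ⟨e, rfl⟩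
  ext x
  obtain ⟨x, rfl⟩ : ∃ y, x = y + v e := ⟨x - v e, (sub_add_cancel x (v e)).symm⟩
  have hfloor (i : ι) :
      coordFloor v s τ (x + v e) i = coordFloor v s τ x i + if i = e then 1 else 0 := by
    rw [coordFloor_add_self hτ he, Pi.add_apply, Pi.single_apply]
  rw [(add_left_injective (v e)).mem_set_image]
  simp only [halfOpenPrism, Set.mem_sdiff, Set.mem_ofPred_eq, Λ.add_mem_cancel_right (hv e),
    Submodule.add_mem_iff_left _ hspan, map_add, hl, hfloor, Finset.mem_insert, if_true,
    eq_sub_iff_add_eq, and_assoc]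
  refine and_congr_right' <| and_congr_right' <| and_congr_right' ⟨?_, ?_⟩
  · rintro ⟨hx, hne⟩ i hi
    grind
  · intro hx
    have := (hx e he).1
    refine ⟨fun i hi => ?_, by grind⟩
    grind

theorem sum_smul_sub_mem_halfOpenPrism_empty (hv : ∀ i, v i ∈ Λ) (hl : ∀ i, l (v i) = 1)
    (hτ : IsBasisOn ℝ v τ) (hs : IsGenericVector v s) {q : V} (hq : q ∈ Λ)
    (hqspan : q ∈ Submodule.span ℝ (Set.range v)) :
    ∑ i ∈ τ, (coordFloor v (-s) τ q i + 1) • v i - q ∈ halfOpenPrism Λ v l s τ ∅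
      (∑ i ∈ τ, (coordFloor v (-s) τ q i + 1) - l q) := by
  refine ⟨Λ.sub_mem (Λ.sum_mem fun i _ => Λ.zsmul_mem (hv i) _) hq,
    Submodule.sub_mem _ (Submodule.sum_mem _ fun i _ => zsmul_mem
      (Submodule.subset_span (Set.mem_range_self i)) _) hqspan, by simp [hl], fun i hi => ?_⟩
  suffices hfloor : coordFloor v s τ (∑ i ∈ τ, (coordFloor v (-s) τ q i + 1) • v i - q) i = 0 from
    ⟨hfloor.ge, fun _ => hfloor⟩
  have hcoord : basisCoord ℝ v τ (∑ i ∈ τ, (coordFloor v (-s) τ q i + 1) • v i - q) i =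
      (coordFloor v (-s) τ q i + 1 : ℤ) - basisCoord ℝ v τ q i := by
    simp_rw [← Int.cast_smul_eq_zsmul ℝ]
    rw [map_sub, Pi.sub_apply, basisCoord_sum_smul_apply hτ.linearIndepOn _ hi]
  rw [coordFloor, hcoord, perturbedFloor_intCast_sub _ _ (hs τ hτ i hi), coordFloor, map_neg,
    Pi.neg_apply]
  ring

section Decomposition

variable [Fintype ι] (hl : ∀ i, 0 < l (v i)) (hw : IsGenericLift v w) (hs : IsGenericVector v s)
  (hs₀ : s ∈ PointedCone.hull ℝ (Set.range v))
include hl hw hs hs₀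

theorem latticeDilate_eq_iUnion :
    latticeDilate Λ v l t = ⋃ τ : {τ // IsRegularCell v w τ}, halfOpenPrism Λ v l s τ τ t := by
  refine Set.Subset.antisymm ?_
    (Set.iUnion_subset fun τ => halfOpenPrism_subset_latticeDilate τ.2.toIsBasisOn)
  rintro x ⟨hΛ, hx, ht⟩
  obtain ⟨τ, ⟨hτ, hxτ⟩, -⟩ := existsUnique_isRegularCell_of_mem_hull hl hw hs hs₀ hx
  exact Set.mem_iUnion.2
    ⟨⟨τ, hτ⟩, mem_halfOpenPrism_self_iff.2 ⟨hΛ, PointedCone.hull_le_span _ _ hx, ht, hxτ⟩⟩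

theorem pairwise_disjoint_halfOpenPrism : Pairwise (Function.onFun Disjoint
    fun τ : {τ // IsRegularCell v w τ} => halfOpenPrism Λ v l s τ τ t) := by
  refine fun τ τ' hne => Set.disjoint_left.2 fun x hx hx' => hne (Subtype.ext ?_)
  have hhull := (halfOpenPrism_subset_latticeDilate τ.2.toIsBasisOn hx).2.1
  exact (existsUnique_isRegularCell_of_mem_hull hl hw hs hs₀ hhull).unique
    ⟨τ.2, (mem_halfOpenPrism_self_iff.1 hx).2.2.2⟩ ⟨τ'.2, (mem_halfOpenPrism_self_iff.1 hx').2.2.2⟩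

end Decomposition

section Counting

variable (hv : ∀ i, v i ∈ Λ) (hl : ∀ i, l (v i) = 1)
  (hfin : ∀ t, (latticeDilate Λ v l t).Finite)
include hv hl hfin

theorem ncard_halfOpenPrism_insert [DecidableEq ι] (hτ : IsBasisOn ℝ v τ) (he : e ∈ τ)
    (heσ : e ∉ σ) : (halfOpenPrism Λ v l s τ (insert e σ) t).ncard =
      (halfOpenPrism Λ v l s τ σ t).ncard +
        (halfOpenPrism Λ v l s τ (insert e σ) (t - 1)).ncard := by
  rw [← Set.ncard_inter_add_ncard_sdiff_eq_ncard _ {x | coordFloor v s τ x e = 0}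
      ((hfin t).subset (halfOpenPrism_subset_latticeDilate hτ)),
    halfOpenPrism_insert_inter he heσ, halfOpenPrism_insert_sdiff hv hl hτ.linearIndepOn he,
    Set.ncard_image_of_injective _ (add_left_injective (v e))]

theorem one_sub_X_mul_prismSeries_insert [DecidableEq ι] (hτ : IsBasisOn ℝ v τ) (he : e ∈ τ)
    (heσ : e ∉ σ) :
    (1 - PowerSeries.X) * prismSeries Λ v l s τ (insert e σ) = prismSeries Λ v l s τ σ := by
  rw [sub_mul, one_mul, sub_eq_iff_eq_add]
  ext t
  rw [map_add, prismSeries, prismSeries, PowerSeries.coeff_mk, PowerSeries.coeff_mk,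
    ncard_halfOpenPrism_insert hv hl hfin hτ he heσ]
  cases t with
  | zero => simp [halfOpenPrism_eq_empty hl hτ]
  | succ t => simp [PowerSeries.coeff_succ_X_mul]

theorem one_sub_X_pow_mul_prismSeries (hτ : IsBasisOn ℝ v τ) (hσ : σ ⊆ τ) :
    (1 - PowerSeries.X) ^ σ.card * prismSeries Λ v l s τ σ = prismSeries Λ v l s τ ∅ := by
  classical
  induction σ using Finset.induction_on with
  | empty => simp
  | insert e σ heσ ih =>
    rw [Finset.insert_subset_iff] at hσ
    rw [Finset.card_insert_of_notMem heσ, pow_succ, mul_assoc,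
      one_sub_X_mul_prismSeries_insert hv hl hfin hτ hσ.1 heσ, ih hσ.2]

open Classical in
theorem ehrhartNumerator_eq_sum [Fintype ι] (hw : IsGenericLift v w) (hs : IsGenericVector v s)
    (hs₀ : s ∈ PointedCone.hull ℝ (Set.range v)) :
    ehrhartNumerator Λ v l = ∑ τ : {τ // IsRegularCell v w τ}, prismSeries Λ v l s τ ∅ := by
  have hpos (i : ι) : 0 < l (v i) := (hl i).symm ▸ one_pos
  have hncard : PowerSeries.mk (fun t => ((latticeDilate Λ v l t).ncard : ℤ)) =
      ∑ τ : {τ // IsRegularCell v w τ}, prismSeries Λ v l s τ τ := by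
    ext t
    rw [PowerSeries.coeff_mk, latticeDilate_eq_iUnion hpos hw hs hs₀, Set.ncard_iUnion_of_finite
      (fun τ => (hfin t).subset (halfOpenPrism_subset_latticeDilate τ.2.toIsBasisOn))
      (pairwise_disjoint_halfOpenPrism hpos hw hs hs₀), finsum_eq_sum_of_fintype]
    simp [prismSeries]
  rw [ehrhartNumerator, hncard, Finset.mul_sum]
  refine Finset.sum_congr rfl fun τ _ => ?_
  rw [← τ.2.card_eq_finrank, one_sub_X_pow_mul_prismSeries hv hl hfin τ.2.toIsBasisOn subset_rfl]

theorem coeff_ehrhartNumerator_eq_zero [Finite ι] {k : ℕ}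
    (hk : Module.finrank ℝ (Submodule.span ℝ (Set.range v)) < k) :
    (ehrhartNumerator Λ v l).coeff k = 0 := by
  classical
  cases nonempty_fintype ι
  obtain ⟨w, hw⟩ := exists_isGenericLift v
  obtain ⟨s, hs₀, hs⟩ := exists_isGenericVector_mem_hull v
  rw [ehrhartNumerator_eq_sum hv hl hfin hw hs hs₀, map_sum]
  refine Finset.sum_eq_zero fun τ _ => ?_
  rw [← τ.2.card_eq_finrank, ← Nat.cast_lt (α := ℝ)] at hk
  rw [prismSeries, PowerSeries.coeff_mk, halfOpenPrism_empty_eq_empty hl τ.2.toIsBasisOn hk,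
    Set.ncard_empty, Nat.cast_zero]

theorem coeff_ehrhartNumerator_ne_zero [Fintype ι] (hw : IsGenericLift v w)
    (hs : IsGenericVector v s) (hs₀ : s ∈ PointedCone.hull ℝ (Set.range v))
    (hτ : IsRegularCell v w τ) {k : ℕ} (hne : (halfOpenPrism Λ v l s τ ∅ k).Nonempty) :
    (ehrhartNumerator Λ v l).coeff k ≠ 0 := by
  classical
  rw [ehrhartNumerator_eq_sum hv hl hfin hw hs hs₀, map_sum]
  simp only [prismSeries, PowerSeries.coeff_mk]
  refine (Finset.sum_pos' (fun _ _ => Nat.cast_nonneg _) ⟨⟨τ, hτ⟩, Finset.mem_univ _, ?_⟩).ne'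
  exact Nat.cast_pos.2 <| (Set.ncard_pos <| (hfin k).subset <|
    halfOpenPrism_subset_latticeDilate hτ.toIsBasisOn).2 hne

-- A lattice point in the interior of the cone, displaced slightly opposite to the generic direction,
-- lies in a half-open cone of the opposite decomposition; reflection turns it into a box point.
theorem exists_coeff_ehrhartNumerator_ne_zero [Finite ι] (hσ : IsBasisOn ℝ v σ) {q : V}
    (hq : q ∈ Λ) (hqspan : q ∈ Submodule.span ℝ (Set.range v))
    (hpos : ∀ i ∈ σ, 0 < basisCoord ℝ v σ q i) {m : ℕ} (hm : l q = m) :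
    ∃ k, Module.finrank ℝ (Submodule.span ℝ (Set.range v)) ≤ k + m ∧
      (ehrhartNumerator Λ v l).coeff k ≠ 0 := by
  cases nonempty_fintype ι
  obtain ⟨w, hw⟩ := exists_isGenericLift v
  obtain ⟨s, hs₀, hs⟩ := exists_isGenericVector_mem_hull v
  have hev := hσ.eventually_add_smul_mem_hull (s := -s) hqspan hpos
    (neg_mem (PointedCone.hull_le_span _ _ hs₀))
  obtain ⟨τ, ⟨hτ, hn⟩, -⟩ := existsUnique_isRegularCell_coordFloor_nonneg
    (fun i => (hl i).symm ▸ one_pos) hw hs.neg hev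
  have hmem := sum_smul_sub_mem_halfOpenPrism_empty hv hl hτ.toIsBasisOn hs hq hqspan
  have hcard : (τ.card : ℤ) ≤ ∑ i ∈ τ, (coordFloor v (-s) τ q i + 1) := by
    simpa using Finset.card_nsmul_le_sum τ _ (1 : ℤ) fun i hi => by linarith [hn i hi]
  have hheight : (m : ℤ) ≤ ∑ i ∈ τ, (coordFloor v (-s) τ q i + 1) := by
    by_contra! hlt
    rw [hm, halfOpenPrism_eq_empty hl hτ.toIsBasisOn (by exact_mod_cast sub_neg.2 hlt)] at hmem
    exact hmem
  obtain ⟨k, hk⟩ := Int.le.dest hheight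
  rw [hm, ← hk, Int.cast_add, Int.cast_natCast, Int.cast_natCast, add_sub_cancel_left] at hmem
  refine ⟨k, ?_, coeff_ehrhartNumerator_ne_zero hv hl hfin hw hs hs₀ hτ ⟨_, hmem⟩⟩
  rw [← hτ.card_eq_finrank]
  omega

end Counting

end EhrhartNumerator

section LatticePolytope

variable {ι V : Type*} [AddCommGroup V] [Module ℝ V] {v : ι → V} {l : V →ₗ[ℝ] ℝ}

theorem mem_convexHull_range_iff [Finite ι] (hl : ∀ i, l (v i) = 1) {x : V} :
    x ∈ convexHull ℝ (Set.range v) ↔ x ∈ PointedCone.hull ℝ (Set.range v) ∧ l x = 1 := by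
  cases nonempty_fintype ι
  constructor
  · intro hx
    refine ⟨convexHull_min PointedCone.subset_hull (PointedCone.convex _) hx, ?_⟩
    exact convexHull_min (Set.range_subset_iff.2 hl) ((convex_singleton 1).linear_preimage l) hx
  · rintro ⟨hx, hlx⟩
    obtain ⟨a, ha, rfl⟩ := mem_hull_range_iff.1 hx
    exact mem_convexHull_of_exists_fintype a v ha (by simpa [hl] using hlx)
      Set.mem_range_self rfl

theorem latticeDilate_of_pos [Finite ι] (hl : ∀ i, l (v i) = 1) (Λ : AddSubgroup V) {t : ℝ}
    (ht : 0 < t) : latticeDilate Λ v l t = t • convexHull ℝ (Set.range v) ∩ Λ := by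
  ext x
  have hhull : t⁻¹ • x ∈ PointedCone.hull ℝ (Set.range v) ↔
      x ∈ PointedCone.hull ℝ (Set.range v) := by
    refine ⟨fun h => ?_, fun h => PointedCone.smul_mem _ (inv_nonneg.2 ht.le) h⟩
    simpa [smul_smul, ht.ne'] using PointedCone.smul_mem _ ht.le h
  rw [Set.mem_inter_iff, Set.mem_smul_set_iff_inv_smul_mem₀ ht.ne', mem_convexHull_range_iff hl,
    hhull, map_smul, smul_eq_mul, inv_mul_eq_one₀ ht.ne', eq_comm (a := t), SetLike.mem_coe,
    and_comm]
  rfl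

theorem latticeDilate_zero [Finite ι] (hl : ∀ i, l (v i) = 1) (Λ : AddSubgroup V) :
    latticeDilate Λ v l 0 = {0} := by
  cases nonempty_fintype ι
  refine Set.Subset.antisymm ?_
    (Set.singleton_subset_iff.2 ⟨Λ.zero_mem, Submodule.zero_mem _, map_zero l⟩)
  rintro x ⟨-, hx, hlx⟩
  obtain ⟨a, ha, rfl⟩ := mem_hull_range_iff.1 hx
  have ha₀ : ∀ i, a i = 0 := by
    simpa [hl, Finset.sum_eq_zero_iff_of_nonneg fun i _ => ha i] using hlx
  simp [ha₀]

theorem latticeDilate_of_neg [Finite ι] (hl : ∀ i, l (v i) = 1) (Λ : AddSubgroup V) {t : ℝ}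
    (ht : t < 0) : latticeDilate Λ v l t = ∅ := by
  cases nonempty_fintype ι
  refine Set.eq_empty_of_forall_notMem ?_
  rintro x ⟨-, hx, rfl⟩
  obtain ⟨a, ha, rfl⟩ := mem_hull_range_iff.1 hx
  exact ht.not_ge (by simpa [hl] using Finset.sum_nonneg fun i _ => ha i)

theorem finrank_vectorSpan_add_one {S : Set V} [FiniteDimensional ℝ V] (hS : S.Nonempty)
    (hl : ∀ x ∈ S, l x = 1) :
    Module.finrank ℝ (vectorSpan ℝ S) + 1 = Module.finrank ℝ (Submodule.span ℝ S) := by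
  obtain ⟨p, hp⟩ := hS
  have hker : vectorSpan ℝ S ≤ LinearMap.ker l := by
    rw [vectorSpan_def, Submodule.span_le]
    rintro _ ⟨x, hx, y, hy, rfl⟩
    simp [hl x hx, hl y hy]
  have hsup : vectorSpan ℝ S ⊔ Submodule.span ℝ {p} = Submodule.span ℝ S := by
    refine le_antisymm (sup_le ?_ (Submodule.span_mono (Set.singleton_subset_iff.2 hp))) ?_
    · rw [vectorSpan_def, Submodule.span_le]
      rintro _ ⟨x, hx, y, hy, rfl⟩
      exact Submodule.sub_mem _ (Submodule.subset_span hx) (Submodule.subset_span hy)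
    · refine Submodule.span_le.2 fun x hx => ?_
      rw [← sub_add_cancel x p]
      exact Submodule.add_mem_sup (vsub_mem_vectorSpan ℝ hx hp)
        (Submodule.mem_span_singleton_self p)
  have hinf : vectorSpan ℝ S ⊓ Submodule.span ℝ {p} = ⊥ := by
    rw [Submodule.eq_bot_iff]
    rintro x ⟨hx, hxp⟩
    obtain ⟨r, rfl⟩ := Submodule.mem_span_singleton.1 hxp
    have hr : r = 0 := by simpa [hl p hp] using hker hx
    rw [hr, zero_smul]
  have hp₀ : p ≠ 0 := fun h => by simpa [h] using hl p hp
  have hfin := Submodule.finrank_sup_add_finrank_inf_eq (vectorSpan ℝ S) (Submodule.span ℝ {p})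
  rw [hsup, hinf, finrank_bot, finrank_span_singleton hp₀] at hfin
  exact hfin.symm

end LatticePolytope

section Degree

variable {N : ℕ}

theorem coeff_one_sub_X_pow (r j : ℕ) :
    ((1 - PowerSeries.X : PowerSeries ℤ) ^ r).coeff j = (-1) ^ j * (r.choose j : ℤ) := by
  have hrescale : (1 - PowerSeries.X : PowerSeries ℤ) ^ r =
      PowerSeries.rescale (-1) (((1 + Polynomial.X : Polynomial ℤ) ^ r : Polynomial ℤ)) := by
    simp [PowerSeries.rescale_X, sub_eq_add_neg]
  rw [hrescale, PowerSeries.coeff_rescale, Polynomial.coeff_coe, Polynomial.coeff_one_add_X_pow]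

theorem deltaCoeff_eq_coeff (P : Set (Fin N → ℝ)) (i : ℕ) :
    deltaCoeff P i = PowerSeries.coeff i
      ((1 - PowerSeries.X) ^ (polyDim P + 1) * PowerSeries.mk fun t => (ehr P t : ℤ)) := by
  rw [PowerSeries.coeff_mul, Finset.Nat.sum_antidiagonal_eq_sum_range_succ_mk, deltaCoeff]
  simp [coeff_one_sub_X_pow]

/-- The lattice of integer points in `κ → ℝ`. -/
def integerLattice (κ : Type*) [Finite κ] : AddSubgroup (κ → ℝ) :=
  (Submodule.span ℤ (Set.range (Pi.basisFun ℝ κ))).toAddSubgroup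

theorem coe_integerLattice (κ : Type*) [Finite κ] :
    (integerLattice κ : Set (κ → ℝ)) = Set.range fun (z : κ → ℤ) i => (z i : ℝ) := by
  ext x
  simp [integerLattice, (Pi.basisFun ℝ κ).mem_span_iff_repr_mem ℤ, Classical.skolem, funext_iff]

variable {ι : Type*} {v : ι → Fin N → ℝ} {l : (Fin N → ℝ) →ₗ[ℝ] ℝ}

theorem polyDim_convexHull_add_one [Nonempty ι] (hl : ∀ i, l (v i) = 1) :
    polyDim (convexHull ℝ (Set.range v)) + 1 =
      Module.finrank ℝ (Submodule.span ℝ (Set.range v)) := by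
  rw [polyDim, affineSpan_convexHull, direction_affineSpan]
  exact finrank_vectorSpan_add_one (Set.range_nonempty v) (Set.forall_mem_range.2 hl)

variable [Finite ι]

theorem latticeDilate_integerLattice_finite (hl : ∀ i, l (v i) = 1) (t : ℝ) :
    (latticeDilate (integerLattice (Fin N)) v l t).Finite := by
  rcases lt_trichotomy t 0 with ht | rfl | ht
  · rw [latticeDilate_of_neg hl _ ht]
    exact Set.finite_empty
  · rw [latticeDilate_zero hl]
    exact Set.finite_singleton 0
  · rw [latticeDilate_of_pos hl _ ht]
    exact ZSpan.setFinite_inter _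
      ((isBounded_convexHull.2 (Set.finite_range v).isBounded).smul₀ t)

theorem ehr_convexHull (hl : ∀ i, l (v i) = 1) (t : ℕ) : ehr (convexHull ℝ (Set.range v)) t =
    (latticeDilate (integerLattice (Fin N)) v l t).ncard := by
  rcases eq_or_ne t 0 with rfl | ht
  · rw [ehr, if_pos rfl, Nat.cast_zero, latticeDilate_zero hl, Set.ncard_singleton]
  have hinj : Function.Injective fun (z : Fin N → ℤ) i => (z i : ℝ) :=
    Int.cast_injective.comp_left
  rw [ehr, if_neg ht, latticeDilate_of_pos hl _ (Nat.cast_pos.2 (Nat.pos_of_ne_zero ht)),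
    coe_integerLattice, ← Set.image_preimage_eq_inter_range, Set.ncard_image_of_injective _ hinj]
  rfl

theorem deltaCoeff_convexHull [Nonempty ι] (hl : ∀ i, l (v i) = 1) (k : ℕ) :
    deltaCoeff (convexHull ℝ (Set.range v)) k =
      (ehrhartNumerator (integerLattice (Fin N)) v l).coeff k := by
  simp_rw [deltaCoeff_eq_coeff, polyDim_convexHull_add_one hl, ehr_convexHull hl, ehrhartNumerator]

theorem polyDim_add_one_le_polyDeg_add (hv : ∀ i, v i ∈ integerLattice (Fin N))
    (hl : ∀ i, l (v i) = 1) {σ : Finset ι} (hσ : IsBasisOn ℝ v σ) {q : Fin N → ℝ}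
    (hq : q ∈ integerLattice (Fin N)) (hqspan : q ∈ Submodule.span ℝ (Set.range v))
    (hpos : ∀ i ∈ σ, 0 < basisCoord ℝ v σ q i) {m : ℕ} (hm : l q = m) :
    σ.card ≤ polyDeg (convexHull ℝ (Set.range v)) + m := by
  rcases isEmpty_or_nonempty ι with _ | _
  · simp [Finset.eq_empty_of_isEmpty]
  have hfin := latticeDilate_integerLattice_finite (v := v) hl
  obtain ⟨k, hk, hne⟩ := exists_coeff_ehrhartNumerator_ne_zero hv hl hfin hσ hq hqspan hpos hm
  rw [← deltaCoeff_convexHull hl] at hne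
  rw [hσ.card_eq_finrank]
  have hbdd : BddAbove {k | deltaCoeff (convexHull ℝ (Set.range v)) k ≠ 0} := by
    refine ⟨Module.finrank ℝ (Submodule.span ℝ (Set.range v)), fun i hi => ?_⟩
    by_contra! hlt
    exact hi (by rw [deltaCoeff_convexHull hl, coeff_ehrhartNumerator_eq_zero hv hl hfin hlt])
  exact hk.trans (Nat.add_le_add_right (le_csSup hbdd hne) m)

theorem le_polyDeg_of_half_sum_mem (hv : ∀ i, v i ∈ integerLattice (Fin N))
    (hl : ∀ i, l (v i) = 1) {C : Finset ι} (hC : LinearIndepOn ℝ v C)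
    (hhalf : (2⁻¹ : ℝ) • ∑ i ∈ C, v i ∈ integerLattice (Fin N)) {h : ℕ} (hCcard : C.card = 2 * h) :
    h ≤ polyDeg (convexHull ℝ (Set.range v)) := by
  classical
  obtain ⟨σ, hCσ, hσ⟩ := exists_isBasisOn_superset hC
  let a : ι → ℝ := fun i => if i ∈ C then 2⁻¹ else 1
  have hsplit : ∑ i ∈ σ, a i • v i = ∑ i ∈ σ \ C, v i + (2⁻¹ : ℝ) • ∑ i ∈ C, v i := by
    rw [← Finset.sum_sdiff hCσ, Finset.smul_sum]
    congr 1 <;> refine Finset.sum_congr rfl fun i hi => ?_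
    · simp [a, (Finset.mem_sdiff.1 hi).2]
    · simp [a, hi]
  have hcard : (σ \ C).card + 2 * h = σ.card := by
    rw [← hCcard, Finset.card_sdiff_add_card_eq_card hCσ]
  have hq := polyDim_add_one_le_polyDeg_add hv hl hσ (q := ∑ i ∈ σ, a i • v i)
    (m := (σ \ C).card + h) ?_ ?_ ?_ ?_
  · omega
  · rw [hsplit]
    exact add_mem (sum_mem fun i _ => hv i) hhalf
  · exact sum_mem fun i _ => Submodule.smul_mem _ _ (Submodule.subset_span ⟨i, rfl⟩)
  · intro i hi
    rw [basisCoord_sum_smul_apply hσ.linearIndepOn _ hi]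
    simp only [a]
    split_ifs <;> norm_num
  · rw [hsplit]
    simp [hl, hCcard]

end Degree

section EdgePolytope

variable {N : ℕ}

theorem rho_mk {i j : Fin N} (h : i ≠ j) : rho s(i, j) = Pi.single i 1 + Pi.single j 1 := by
  ext x
  rcases eq_or_ne x i with rfl | hi
  · simp [rho, h]
  · simp [rho, Pi.single_apply, hi]

theorem sum_rho {e : Sym2 (Fin N)} (he : ¬e.IsDiag) : ∑ x, rho e x = 2 := by
  induction e with
  | _ i j =>
    rw [rho_mk (Sym2.mk_isDiag_iff.not.1 he)]
    simp [Finset.sum_add_distrib, one_add_one_eq_two]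

theorem rho_mem_integerLattice (e : Sym2 (Fin N)) : rho e ∈ integerLattice (Fin N) := by
  rw [← SetLike.mem_coe, coe_integerLattice]
  exact ⟨fun x => if x ∈ e then 1 else 0, by ext; simp [rho]⟩

theorem single_mem_integerLattice (x : Fin N) : Pi.single x 1 ∈ integerLattice (Fin N) :=
  Submodule.subset_span ⟨x, Pi.basisFun_apply ℝ (Fin N) x⟩

theorem le_polyDeg_edgePolytope (G : SimpleGraph (Fin N)) {D : Finset (Sym2 (Fin N))}
    (hDG : ↑D ⊆ G.edgeSet) (hD : LinearIndepOn ℝ rho (D : Set (Sym2 (Fin N))))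
    (hhalf : (2⁻¹ : ℝ) • ∑ e ∈ D, rho e ∈ integerLattice (Fin N)) {h : ℕ}
    (hcard : D.card = 2 * h) : h ≤ polyDeg (edgePolytope G) := by
  classical
  have hmap : (D.subtype (· ∈ G.edgeSet)).map (Function.Embedding.subtype _) = D :=
    Finset.subtype_map_of_mem hDG
  have hl (e : G.edgeSet) :
      ((2⁻¹ : ℝ) • ∑ x, (LinearMap.proj x : (Fin N → ℝ) →ₗ[ℝ] ℝ)) (rho e) = 1 := by
    simp [sum_rho (G.not_isDiag_of_mem_edgeSet e.2)]
  rw [edgePolytope, Set.image_eq_range]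
  refine le_polyDeg_of_half_sum_mem (v := fun e : G.edgeSet => rho e.1)
    (C := D.subtype (· ∈ G.edgeSet)) (fun e => rho_mem_integerLattice e.1) hl ?_ ?_ ?_
  · rw [← hmap, Finset.coe_map] at hD
    exact hD.comp_of_image Subtype.val_injective.injOn
  · rwa [← hmap, Finset.sum_map] at hhalf
  · rwa [← hmap, Finset.card_map] at hcard

end EdgePolytope

section OddCycles

open SimpleGraph

variable {N : ℕ} {G : SimpleGraph (Fin N)} {u v w : Fin N}

theorem sum_map_rho_edges_add (p : G.Walk u v) :
    (p.edges.map rho).sum + Pi.single u 1 + Pi.single v 1 =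
      (2 : ℝ) • (p.support.map fun x => Pi.single x 1).sum := by
  induction p with
  | nil => simp [two_smul]
  | cons h p ih =>
    rw [Walk.edges_cons, Walk.support_cons, List.map_cons, List.map_cons, List.sum_cons,
      List.sum_cons, smul_add, ← ih, rho_mk h.ne]
    module

theorem half_sum_map_rho_edges_mem_integerLattice (c : G.Walk v v) :
    (2⁻¹ : ℝ) • (c.edges.map rho).sum ∈ integerLattice (Fin N) := by
  have hsum := sum_map_rho_edges_add c
  rw [← Walk.cons_tail_support, List.map_cons, List.sum_cons, smul_add, two_smul, add_assoc,
    add_comm, add_right_inj] at hsum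
  rw [hsum, inv_smul_smul₀ two_ne_zero]
  refine AddSubgroup.list_sum_mem _ fun y hy => ?_
  obtain ⟨x, -, rfl⟩ := List.mem_map.1 hy
  exact single_mem_integerLattice x

theorem single_sub_mem_of_rho_mem {U : Submodule ℝ (Fin N → ℝ)} (p : G.Walk u v)
    (hU : ∀ e ∈ p.edges, rho e ∈ U) :
    Pi.single u 1 - (-1 : ℝ) ^ p.length • Pi.single v 1 ∈ U := by
  induction p with
  | nil => simp
  | cons h p ih =>
    rw [Walk.edges_cons, List.forall_mem_cons, rho_mk h.ne] at hU
    convert U.sub_mem hU.1 (ih hU.2) using 1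
    rw [Walk.length_cons, pow_succ]
    module

-- Going once around an odd closed walk gives twice the unit vector at its base point.
theorem single_mem_of_odd_closed_walk {U : Submodule ℝ (Fin N → ℝ)} (c : G.Walk v v)
    (hodd : Odd c.length) (hU : ∀ e ∈ c.edges, rho e ∈ U) {x : Fin N} (hx : x ∈ c.support) :
    Pi.single x (1 : ℝ) ∈ U := by
  have hrot : ∀ e ∈ (c.rotate x hx).edges, rho e ∈ U := fun e he =>
    hU e ((c.rotate_edges x hx).mem_iff.1 he)
  have hmem := single_sub_mem_of_rho_mem (c.rotate x hx) hrot
  rw [c.length_rotate x hx, hodd.neg_one_pow, neg_one_smul, sub_neg_eq_add, ← two_smul ℝ] at hmem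
  exact (U.smul_mem_iff two_ne_zero).1 hmem

theorem linearIndepOn_rho_of_odd_cycle {c : G.Walk v v} (hc : c.IsCycle) (hodd : Odd c.length) :
    LinearIndepOn ℝ rho (c.edges.toFinset : Set (Sym2 (Fin N))) := by
  let U := Submodule.span ℝ (Set.range fun e : (c.edges.toFinset : Set (Sym2 (Fin N))) => rho e.1)
  have hrho : ∀ e ∈ c.edges, rho e ∈ U := fun e he =>
    Submodule.subset_span ⟨⟨e, List.mem_toFinset.2 he⟩, rfl⟩
  have hsingle : LinearIndependent ℝ
      fun x : c.support.tail.toFinset => (Pi.single x.1 1 : Fin N → ℝ) :=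
    (Pi.linearIndependent_single_one (Fin N) ℝ).comp _ Subtype.val_injective
  have hle : Submodule.span ℝ
      (Set.range fun x : c.support.tail.toFinset => (Pi.single x.1 1 : Fin N → ℝ)) ≤ U := by
    rw [Submodule.span_le]
    rintro _ ⟨x, rfl⟩
    exact single_mem_of_odd_closed_walk c hodd hrho
      (List.mem_of_mem_tail (List.mem_toFinset.1 x.2))
  have hcard : c.edges.toFinset.card = c.support.tail.toFinset.card := by
    rw [List.toFinset_card_of_nodup hc.edges_nodup, List.toFinset_card_of_nodup hc.support_nodup]
    simp
  have hfinrank := Submodule.finrank_mono hle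
  rw [finrank_span_eq_card hsingle, Fintype.card_coe, ← hcard] at hfinrank
  exact linearIndependent_iff_card_le_finrank_span.2 ((Fintype.card_coe _).trans_le hfinrank)

theorem rho_mem_span_single_of_mem_edges (p : G.Walk u v) {e : Sym2 (Fin N)} (he : e ∈ p.edges) :
    rho e ∈ Submodule.span ℝ ((fun x => (Pi.single x 1 : Fin N → ℝ)) '' {x | x ∈ p.support}) := by
  induction e with
  | _ i j =>
    rw [rho_mk (p.adj_of_mem_edges he).ne]
    exact add_mem (Submodule.subset_span ⟨i, p.fst_mem_support_of_mem_edges he, rfl⟩)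
      (Submodule.subset_span ⟨j, p.snd_mem_support_of_mem_edges he, rfl⟩)

theorem linearIndepOn_rho_of_disjoint_odd_cycles {c₁ : G.Walk v v} {c₂ : G.Walk w w}
    (hc₁ : c₁.IsCycle) (hc₂ : c₂.IsCycle) (hodd₁ : Odd c₁.length) (hodd₂ : Odd c₂.length)
    (hdisj : ∀ x, x ∈ c₁.support → x ∉ c₂.support) :
    LinearIndepOn ℝ rho
      (↑(c₁.edges.toFinset ∪ c₂.edges.toFinset) : Set (Sym2 (Fin N))) := by
  rw [Finset.coe_union]
  refine (linearIndepOn_rho_of_odd_cycle hc₁ hodd₁).union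
    (linearIndepOn_rho_of_odd_cycle hc₂ hodd₂) ?_
  refine ((Pi.linearIndependent_single_one (Fin N) ℝ).disjoint_span_image
    (Set.disjoint_left.2 hdisj)).mono ?_ ?_
  all_goals
    rw [Submodule.span_le]
    rintro _ ⟨e, he, rfl⟩
    exact rho_mem_span_single_of_mem_edges _ (List.mem_toFinset.1 he)

theorem disjoint_edges_of_disjoint_support {u' v' : Fin N} {p : G.Walk u v} {q : G.Walk u' v'}
    (h : ∀ x, x ∈ p.support → x ∉ q.support) :
    Disjoint p.edges.toFinset q.edges.toFinset := by
  refine Finset.disjoint_left.2 fun e hp hq => ?_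
  rw [List.mem_toFinset] at hp hq
  induction e with
  | _ i j => exact h i (p.fst_mem_support_of_mem_edges hp) (q.fst_mem_support_of_mem_edges hq)

end OddCycles

theorem polyDeg_ge_three_of_two_disjoint_odd_cycles_general
    {N : ℕ} (G : SimpleGraph (Fin N)) {v w : Fin N} (c₁ : G.Walk v v) (c₂ : G.Walk w w)
    (hc₁ : c₁.IsCycle) (hc₂ : c₂.IsCycle) (hodd₁ : Odd c₁.length) (hodd₂ : Odd c₂.length)
    (hdisj : ∀ x, x ∈ c₁.support → x ∉ c₂.support) :
    c₁.length + c₂.length ≤ 2 * polyDeg (edgePolytope G) := by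
  have hEdisj := disjoint_edges_of_disjoint_support hdisj
  have hE : (↑(c₁.edges.toFinset ∪ c₂.edges.toFinset) : Set (Sym2 (Fin N))) ⊆ G.edgeSet := by
    intro e he
    rcases Finset.mem_union.1 (Finset.mem_coe.1 he) with he | he
    · exact c₁.edges_subset_edgeSet (List.mem_toFinset.1 he)
    · exact c₂.edges_subset_edgeSet (List.mem_toFinset.1 he)
  have hcard : (c₁.edges.toFinset ∪ c₂.edges.toFinset).card = c₁.length + c₂.length := by
    rw [Finset.card_union_of_disjoint hEdisj, List.toFinset_card_of_nodup hc₁.edges_nodup,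
      List.toFinset_card_of_nodup hc₂.edges_nodup, c₁.length_edges, c₂.length_edges]
  have hhalf : (2⁻¹ : ℝ) • ∑ e ∈ c₁.edges.toFinset ∪ c₂.edges.toFinset, rho e ∈
      integerLattice (Fin N) := by
    rw [Finset.sum_union hEdisj, List.sum_toFinset _ hc₁.edges_nodup,
      List.sum_toFinset _ hc₂.edges_nodup, smul_add]
    exact add_mem (half_sum_map_rho_edges_mem_integerLattice c₁)
      (half_sum_map_rho_edges_mem_integerLattice c₂)
  have hindep := linearIndepOn_rho_of_disjoint_odd_cycles hc₁ hc₂ hodd₁ hodd₂ hdisj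
  obtain ⟨h, hh⟩ := even_iff_exists_two_mul.1 (hodd₁.add_odd hodd₂)
  have hle := le_polyDeg_edgePolytope G hE hindep hhalf (hcard.trans hh)
  omega

/-- If a finite connected simple graph `G` has two vertex-disjoint odd
cycles, then `deg(P_G) ≥ 3`. -/
theorem polyDeg_ge_three_of_two_disjoint_odd_cycles
    {N : ℕ} (G : SimpleGraph (Fin N)) (hG : G.Connected)
    {v w : Fin N} (c₁ : G.Walk v v) (c₂ : G.Walk w w)
    (hc₁ : c₁.IsCycle) (hc₂ : c₂.IsCycle)
    (hodd₁ : Odd c₁.length) (hodd₂ : Odd c₂.length)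
    (hdisj : ∀ x, x ∈ c₁.support → x ∉ c₂.support) :
    3 ≤ polyDeg (edgePolytope G) := by
  have hlength :=
    polyDeg_ge_three_of_two_disjoint_odd_cycles_general G c₁ c₂ hc₁ hc₂ hodd₁ hodd₂ hdisj
  linarith [hc₁.three_le_length, hc₂.three_le_length]
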